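/- arXiv:1905.07088 — 2 statements merged into one kernel-verified Lean document; each statement's English description precedes it below -/
import Mathlib

section
/- Define f(θ; x, v) = v^⊤ ∇_x s_m(x;θ) v + ½ (v^⊤ s_m(x;θ))². Suppose that for all θ₁, θ₂ ∈ Θ, ‖∇_x s_m(x;θ₁) − ∇_x s_m(x;θ₂)‖_F ≤ L₁(x) ‖θ₁ − θ₂‖₂ and ‖s_m(x;θ₁) s_m(x;θ₁)^⊤ − s_m(x;θ₂) s_m(x;θ₂)^⊤‖_F ≤ L₂(x) ‖θ₁ − θ₂‖₂, with E_{p_d}[L₁²(x)] < ∞ and E_{p_d}[L₂²(x)] < ∞, and that E_{p_v}[‖v v^⊤‖_F²] < ∞. Then for all θ₁, θ₂ ∈ Θ, |f(θ₁; x, v) − f(θ₂; x, v)| ≤ L(x, v) ‖θ₁ − θ₂‖₂ where L(x, v) = √(Σ_{i,j} v_i² v_j²) · √(2 L₁²(x) + ½ L₂²(x)), and moreover E_{p_d, p_v}[L²(x, v)] < ∞. (Lemma B.3 of the paper.) -/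
open MeasureTheory RealInnerProductSpace

noncomputable section

/-- The score function `∇ₓ log p(x)` of a density `p` on `ℝ^D`. -/
def score {D : ℕ} (p : EuclideanSpace ℝ (Fin D) → ℝ) (x : EuclideanSpace ℝ (Fin D)) :
    EuclideanSpace ℝ (Fin D) :=
  gradient (fun y => Real.log (p y)) x

/-!
For the Frobenius inner product, `vᵀ A v + ½ (vᵀ s)² = ⟨v vᵀ, A⟩ + ½ ⟨v vᵀ, s sᵀ⟩`, so the
integrand is linear in the pair `(A, s sᵀ)`. Cauchy–Schwarz bounds its variation by
`‖v vᵀ‖_F (a + ½ b)` times the distance of the parameters, and `(a + ½ b)² ≤ 2 a² + ½ b²`. The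
square of the resulting constant is a function of `v` times a function of `x`, hence integrable for
the product measure as soon as both factors are.
-/

/-- The sliced score matching integrand `vᵀ A v + ½ (vᵀ s)²` at the projection vector `v`, where
`A` stands for the Hessian `∇ₓ s_m` and `s` for the score `s_m` at a fixed point. -/
def ssmIntegrand {ι : Type*} [Fintype ι]
    (A : EuclideanSpace ℝ ι →ₗ[ℝ] EuclideanSpace ℝ ι) (s v : EuclideanSpace ℝ ι) : ℝ :=
  ⟪v, A v⟫ + (1/2) * ⟪v, s⟫ ^ 2

/-- The constant `√(Σᵢⱼ vᵢ² vⱼ²) · √(2a² + ½b²)` with which `ssmIntegrand` is Lipschitz in the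
parameter, given Lipschitz constants `a` of the Hessian and `b` of `s sᵀ` in Frobenius norm. -/
def ssmLipschitzConst {ι : Type*} [Fintype ι] (v : EuclideanSpace ℝ ι) (a b : ℝ) : ℝ :=
  Real.sqrt (∑ i, ∑ j, (v i) ^ 2 * (v j) ^ 2) * Real.sqrt (2 * a ^ 2 + (1/2) * b ^ 2)

theorem abs_sum_sum_mul_le_sqrt_mul_sqrt {ι κ : Type*} [Fintype ι] [Fintype κ]
    (M N : ι → κ → ℝ) :
    |∑ i, ∑ j, M i j * N i j| ≤
      Real.sqrt (∑ i, ∑ j, M i j ^ 2) * Real.sqrt (∑ i, ∑ j, N i j ^ 2) := by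
  rw [← Real.sqrt_mul (by positivity)]
  apply Real.abs_le_sqrt
  simpa only [Fintype.sum_prod_type] using
    Finset.sum_mul_sq_le_sq_mul_sq Finset.univ (fun p : ι × κ => M p.1 p.2) fun p => N p.1 p.2

theorem add_half_mul_le_sqrt (a b : ℝ) :
    a + (1/2) * b ≤ Real.sqrt (2 * a ^ 2 + (1/2) * b ^ 2) :=
  Real.le_sqrt_of_sq_le (by linarith [sq_nonneg (a - (1/2) * b)])

theorem lintegral_lintegral_ofReal_lt_top {α β : Type*} [MeasurableSpace α] [MeasurableSpace β]
    {μ : Measure α} {ν : Measure β} [SFinite ν] {f : α → β → ℝ}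
    (hf : Integrable (fun z : α × β => f z.1 z.2) (μ.prod ν)) :
    ∫⁻ a, ∫⁻ b, ENNReal.ofReal (f a b) ∂ν ∂μ < ⊤ := by
  rw [lintegral_lintegral hf.aemeasurable.ennreal_ofReal]
  exact hf.lintegral_lt_top

section Coordinates

variable {ι κ : Type*} [Fintype ι] [Fintype κ]

theorem inner_map_eq_sum_sum [DecidableEq κ]
    (A : EuclideanSpace ℝ κ →ₗ[ℝ] EuclideanSpace ℝ ι)
    (u : EuclideanSpace ℝ ι) (v : EuclideanSpace ℝ κ) :
    ⟪u, A v⟫ = ∑ i, ∑ j, (u i * v j) * A (EuclideanSpace.single j 1) i := by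
  have map_eq_sum : A v = ∑ j, v j • A (EuclideanSpace.single j 1) := by
    simpa using congrArg A ((EuclideanSpace.basisFun κ ℝ).sum_repr v).symm
  simp only [map_eq_sum, PiLp.inner_apply, WithLp.ofLp_sum, WithLp.ofLp_smul, Finset.sum_apply,
    Pi.smul_apply, smul_eq_mul, RCLike.inner_apply, conj_trivial, Finset.sum_mul]
  exact Finset.sum_congr rfl fun i _ => Finset.sum_congr rfl fun j _ => by ring

theorem inner_sq_eq_sum_sum (v s : EuclideanSpace ℝ ι) :
    ⟪v, s⟫ ^ 2 = ∑ i, ∑ j, (v i * v j) * (s i * s j) := by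
  simp only [PiLp.inner_apply, RCLike.inner_apply, conj_trivial, sq, Finset.sum_mul_sum]
  exact Finset.sum_congr rfl fun i _ => Finset.sum_congr rfl fun j _ => by ring

theorem abs_inner_map_sub_inner_map_le [DecidableEq κ]
    (A B : EuclideanSpace ℝ κ →ₗ[ℝ] EuclideanSpace ℝ ι)
    (u : EuclideanSpace ℝ ι) (v : EuclideanSpace ℝ κ) :
    |⟪u, A v⟫ - ⟪u, B v⟫| ≤
      Real.sqrt (∑ i, ∑ j, (u i) ^ 2 * (v j) ^ 2) *
        Real.sqrt (∑ i, ∑ j,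
          (A (EuclideanSpace.single j 1) i - B (EuclideanSpace.single j 1) i) ^ 2) := by
  simpa only [inner_map_eq_sum_sum, mul_sub, Finset.sum_sub_distrib, mul_pow] using
    abs_sum_sum_mul_le_sqrt_mul_sqrt (fun i j => u i * v j)
      fun i j => A (EuclideanSpace.single j 1) i - B (EuclideanSpace.single j 1) i

theorem abs_inner_sq_sub_inner_sq_le (v s t : EuclideanSpace ℝ ι) :
    |⟪v, s⟫ ^ 2 - ⟪v, t⟫ ^ 2| ≤
      Real.sqrt (∑ i, ∑ j, (v i) ^ 2 * (v j) ^ 2) *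
        Real.sqrt (∑ i, ∑ j, (s i * s j - t i * t j) ^ 2) := by
  simpa only [inner_sq_eq_sum_sum, mul_sub, Finset.sum_sub_distrib, mul_pow] using
    abs_sum_sum_mul_le_sqrt_mul_sqrt (fun i j => v i * v j) fun i j => s i * s j - t i * t j

end Coordinates

section SlicedScoreMatching

variable {ι : Type*} [Fintype ι]

theorem ssmLipschitzConst_sq (v : EuclideanSpace ℝ ι) (a b : ℝ) :
    ssmLipschitzConst v a b ^ 2 =
      (∑ i, ∑ j, (v i * v j) ^ 2) * (2 * a ^ 2 + (1/2) * b ^ 2) := by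
  simp only [ssmLipschitzConst, mul_pow]
  rw [Real.sq_sqrt (by positivity), Real.sq_sqrt (by positivity)]

theorem abs_ssmIntegrand_sub_le [DecidableEq ι]
    {A B : EuclideanSpace ℝ ι →ₗ[ℝ] EuclideanSpace ℝ ι} {s t : EuclideanSpace ℝ ι} {a b d : ℝ}
    (hd : 0 ≤ d)
    (hAB : Real.sqrt (∑ i, ∑ j,
      (A (EuclideanSpace.single j 1) i - B (EuclideanSpace.single j 1) i) ^ 2) ≤ a * d)
    (hst : Real.sqrt (∑ i, ∑ j, (s i * s j - t i * t j) ^ 2) ≤ b * d)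
    (v : EuclideanSpace ℝ ι) :
    |ssmIntegrand A s v - ssmIntegrand B t v| ≤ ssmLipschitzConst v a b * d := by
  set V := Real.sqrt (∑ i, ∑ j, (v i) ^ 2 * (v j) ^ 2)
  have quadratic_le : |⟪v, A v⟫ - ⟪v, B v⟫| ≤ V * (a * d) :=
    (abs_inner_map_sub_inner_map_le A B v v).trans (by gcongr)
  have square_le : |⟪v, s⟫ ^ 2 - ⟪v, t⟫ ^ 2| ≤ V * (b * d) :=
    (abs_inner_sq_sub_inner_sq_le v s t).trans (by gcongr)
  calc |ssmIntegrand A s v - ssmIntegrand B t v|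
      = |(⟪v, A v⟫ - ⟪v, B v⟫) + (1/2) * (⟪v, s⟫ ^ 2 - ⟪v, t⟫ ^ 2)| := by
        unfold ssmIntegrand; congr 1; ring
    _ ≤ |⟪v, A v⟫ - ⟪v, B v⟫| + (1/2) * |⟪v, s⟫ ^ 2 - ⟪v, t⟫ ^ 2| :=
        (abs_add_le _ _).trans_eq (by rw [abs_mul (1/2), abs_of_pos (one_half_pos (α := ℝ))])
    _ ≤ V * (a * d) + (1/2) * (V * (b * d)) := by gcongr
    _ = V * (a + (1/2) * b) * d := by ring
    _ ≤ V * Real.sqrt (2 * a ^ 2 + (1/2) * b ^ 2) * d := by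
        gcongr; exact add_half_mul_le_sqrt a b

theorem integrable_mul_ssmLipschitzConst_sq {X : Type*} [MeasurableSpace X]
    {μ : Measure (EuclideanSpace ℝ ι)} {ν : Measure X} {w L1 L2 : X → ℝ}
    (hL1 : Integrable (fun x => w x * L1 x ^ 2) ν)
    (hL2 : Integrable (fun x => w x * L2 x ^ 2) ν)
    (hv : Integrable (fun v => ∑ i, ∑ j, (v i * v j) ^ 2) μ) :
    Integrable (fun z : EuclideanSpace ℝ ι × X =>
      w z.2 * ssmLipschitzConst z.1 (L1 z.2) (L2 z.2) ^ 2) (μ.prod ν) := by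
  refine (hv.mul_prod ((hL1.const_mul 2).add (hL2.const_mul (1/2)))).congr (.of_forall fun z => ?_)
  simp only [ssmLipschitzConst_sq, Pi.add_apply]
  ring

end SlicedScoreMatching

theorem ssm_integrand_lipschitz_general {ι P X : Type*} [Fintype ι] [DecidableEq ι]
    [PseudoMetricSpace P] [MeasurableSpace X]
    {Θ : Set P} {μ : Measure (EuclideanSpace ℝ ι)} {ν : Measure X}
    {A : P → X → EuclideanSpace ℝ ι →ₗ[ℝ] EuclideanSpace ℝ ι} {s : P → X → EuclideanSpace ℝ ι}
    {w L1 L2 : X → ℝ}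
    (hA : ∀ θ₁ ∈ Θ, ∀ θ₂ ∈ Θ, ∀ x,
      Real.sqrt (∑ i, ∑ j, (A θ₁ x (EuclideanSpace.single j 1) i
          - A θ₂ x (EuclideanSpace.single j 1) i) ^ 2) ≤ L1 x * dist θ₁ θ₂)
    (hs : ∀ θ₁ ∈ Θ, ∀ θ₂ ∈ Θ, ∀ x,
      Real.sqrt (∑ i, ∑ j, (s θ₁ x i * s θ₁ x j - s θ₂ x i * s θ₂ x j) ^ 2)
        ≤ L2 x * dist θ₁ θ₂)
    (hL1 : Integrable (fun x => w x * L1 x ^ 2) ν)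
    (hL2 : Integrable (fun x => w x * L2 x ^ 2) ν)
    (hv : Integrable (fun v => ∑ i, ∑ j, (v i * v j) ^ 2) μ) :
    (∀ θ₁ ∈ Θ, ∀ θ₂ ∈ Θ, ∀ x v,
      |ssmIntegrand (A θ₁ x) (s θ₁ x) v - ssmIntegrand (A θ₂ x) (s θ₂ x) v|
        ≤ ssmLipschitzConst v (L1 x) (L2 x) * dist θ₁ θ₂)
    ∧ Integrable (fun z : EuclideanSpace ℝ ι × X =>
        w z.2 * ssmLipschitzConst z.1 (L1 z.2) (L2 z.2) ^ 2) (μ.prod ν) :=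
  ⟨fun θ₁ h₁ θ₂ h₂ x => abs_ssmIntegrand_sub_le dist_nonneg (hA θ₁ h₁ θ₂ h₂ x) (hs θ₁ h₁ θ₂ h₂ x),
    integrable_mul_ssmLipschitzConst_sq hL1 hL2 hv⟩

/-- **Lemma B.3 of the paper.** If `∇ₓ s_m(x;·)` and `s_m(x;·) s_m(x;·)ᵀ` are Lipschitz
in `θ` (in Frobenius norm) with square-integrable constants `L₁, L₂`, and the projection
vectors satisfy `E[‖v vᵀ‖_F²] < ∞`, then `f(θ;x,v) = vᵀ ∇ₓ s_m(x;θ) v + ½ (vᵀ s_m(x;θ))²`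
is Lipschitz in `θ` with constant `L(x,v) = √(Σᵢⱼ vᵢ² vⱼ²) · √(2L₁²(x) + ½L₂²(x))`,
and `E_{p_d,p_v}[L²(x,v)] < ∞`. -/
theorem ssm_integrand_lipschitz
    (D K : ℕ) (hD : 1 ≤ D)
    (Θ : Set (EuclideanSpace ℝ (Fin K)))
    (pd : EuclideanSpace ℝ (Fin D) → ℝ)
    (pm : EuclideanSpace ℝ (Fin K) → EuclideanSpace ℝ (Fin D) → ℝ)
    (μv : Measure (EuclideanSpace ℝ (Fin D))) [IsProbabilityMeasure μv]
    -- data density: positive, differentiable, integrates to one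
    (hpd_pos : ∀ x, 0 < pd x) (hpd_diff : Differentiable ℝ pd)
    (hpd_prob : ∫ x, pd x = 1)
    -- model densities: positive, twice continuously differentiable
    (hpm_pos : ∀ θ x, 0 < pm θ x) (hpm_smooth : ∀ θ, ContDiff ℝ 2 (pm θ))
    -- Lipschitz continuity of the Hessian `∇ₓ s_m` in Frobenius norm
    (L1 L2 : EuclideanSpace ℝ (Fin D) → ℝ)
    (hL1 : ∀ θ₁ ∈ Θ, ∀ θ₂ ∈ Θ, ∀ x,
      Real.sqrt (∑ i, ∑ j, ((fderiv ℝ (score (pm θ₁)) x (EuclideanSpace.single j 1)) i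
          - (fderiv ℝ (score (pm θ₂)) x (EuclideanSpace.single j 1)) i) ^ 2)
        ≤ L1 x * ‖θ₁ - θ₂‖)
    -- Lipschitz continuity of `s_m s_mᵀ` in Frobenius norm
    (hL2 : ∀ θ₁ ∈ Θ, ∀ θ₂ ∈ Θ, ∀ x,
      Real.sqrt (∑ i, ∑ j, (score (pm θ₁) x i * score (pm θ₁) x j
          - score (pm θ₂) x i * score (pm θ₂) x j) ^ 2)
        ≤ L2 x * ‖θ₁ - θ₂‖)
    -- square integrability of the Lipschitz constants: E[L₁²] < ∞, E[L₂²] < ∞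
    (hL1int : Integrable (fun x => pd x * L1 x ^ 2))
    (hL2int : Integrable (fun x => pd x * L2 x ^ 2))
    -- bounded fourth moments of projection vectors: E[‖v vᵀ‖_F²] < ∞
    (hv4 : Integrable (fun v => ∑ i, ∑ j, (v i * v j) ^ 2) μv) :
    (∀ θ₁ ∈ Θ, ∀ θ₂ ∈ Θ, ∀ (x v : EuclideanSpace ℝ (Fin D)),
      |(⟪v, fderiv ℝ (score (pm θ₁)) x v⟫ + (1/2) * ⟪v, score (pm θ₁) x⟫ ^ 2)
          - (⟪v, fderiv ℝ (score (pm θ₂)) x v⟫ + (1/2) * ⟪v, score (pm θ₂) x⟫ ^ 2)|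
        ≤ (Real.sqrt (∑ i, ∑ j, (v i) ^ 2 * (v j) ^ 2)
            * Real.sqrt (2 * L1 x ^ 2 + (1/2) * L2 x ^ 2)) * ‖θ₁ - θ₂‖)
    ∧ (∫⁻ v, ∫⁻ x, ENNReal.ofReal (pd x *
          (Real.sqrt (∑ i, ∑ j, (v i) ^ 2 * (v j) ^ 2)
            * Real.sqrt (2 * L1 x ^ 2 + (1/2) * L2 x ^ 2)) ^ 2) ∂volume ∂μv) < ⊤ := by
  simp only [← dist_eq_norm] at hL1 hL2 ⊢
  exact (ssm_integrand_lipschitz_general (A := fun θ x => (fderiv ℝ (score (pm θ)) x).toLinearMap)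
    hL1 hL2 hL1int hL2int hv4).imp_right lintegral_lintegral_ofReal_lt_top
end
end

section
/- Let g : ℝ^D → ℝ be twice differentiable at x with gradient ∇g(x) and Hessian H(x). Then, as v → 0 in ℝ^D, log( e^{g(x)} + e^{g(x+v)} ) = g(x) + log 2 + ½ ( ∇g(x)^⊤ v + ½ v^⊤ H(x) v ) + ⅛ ( ∇g(x)^⊤ v )² + o(‖v‖²). (The key expansion in Proposition C.1 connecting noise contrastive estimation to sliced score matching.) -/
open RealInnerProductSpace Asymptotics Filter

noncomputable section

/-!
The function `F y = log (exp (g x) + exp (g y))` is itself twice differentiable at `x`: its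
derivative is `F' y = σ (g y - g x) • g' y` with `σ` the sigmoid, and since `σ 0 = 1/2` and
`σ' 0 = 1/4` its second derivative at `x` is `(1/4) g' x ⊗ g' x + (1/2) g'' x`. The expansion is
the second-order Taylor formula with Peano remainder for `F`. As `g` is twice differentiable at
`x` only, that formula comes from the mean value inequality: by symmetry of the second derivative,
the derivative of the Taylor remainder is the first-order remainder of `F'`, which is `o(‖v‖)`.
-/

section Taylor

variable {E F : Type*} [NormedAddCommGroup E] [NormedSpace ℝ E]
  [NormedAddCommGroup F] [NormedSpace ℝ F]

theorem isLittleO_norm_pow_succ_of_eventually_hasFDerivAt {f : E → F} {f' : E → E →L[ℝ] F}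
    {x : E} {n : ℕ} (hf : ∀ᶠ y in nhds x, HasFDerivAt f (f' y) y)
    (hf' : f' =o[nhds x] fun y => ‖y - x‖ ^ n) :
    (fun y => f y - f x) =o[nhds x] fun y => ‖y - x‖ ^ (n + 1) := by
  obtain ⟨r, hr, hball⟩ := Metric.eventually_nhds_iff_ball.1 hf
  have hnhds : nhdsWithin x (Metric.ball x r) = nhds x :=
    Metric.isOpen_ball.nhdsWithin_eq (Metric.mem_ball_self hr)
  rw [← hnhds] at hf' ⊢
  exact (convex_ball x r).isLittleO_pow_succ (Metric.mem_ball_self hr)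
    (fun y hy => (hball y hy).hasFDerivWithinAt) hf'

theorem hasFDerivAt_half_smul_bilin_self {B : E →L[ℝ] E →L[ℝ] F} (hB : ∀ v w, B v w = B w v)
    (v : E) : HasFDerivAt (fun w => (1 / 2 : ℝ) • B w w) (B v) v := by
  refine ((B.hasFDerivAt.clm_apply (hasFDerivAt_id v)).const_smul (1 / 2 : ℝ)).congr_fderiv ?_
  ext w
  simp only [ContinuousLinearMap.comp_id, id_eq, add_apply, smul_apply,
    ContinuousLinearMap.flip_apply, hB w v]
  module

theorem taylor_two_isLittleO {f : E → F} {f' : E → E →L[ℝ] F} {f'' : E →L[ℝ] E →L[ℝ] F} {x : E}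
    (hf : ∀ᶠ y in nhds x, HasFDerivAt f (f' y) y) (hf' : HasFDerivAt f' f'' x) :
    (fun v => f (x + v) - (f x + f' x v + (1 / 2 : ℝ) • f'' v v))
      =o[nhds 0] fun v => ‖v‖ ^ 2 := by
  have hsymm : ∀ v w, f'' v w = f'' w v := second_derivative_symmetric_of_eventually hf hf'
  have htendsto : Tendsto (fun v => x + v) (nhds 0) (nhds x) := by
    simpa using (continuous_const_add x).tendsto 0
  have hremainder : ∀ᶠ v in nhds (0 : E),
      HasFDerivAt (fun w => f (x + w) - (f x + f' x w + (1 / 2 : ℝ) • f'' w w))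
        (f' (x + v) - f' x - f'' v) v := by
    filter_upwards [htendsto.eventually hf] with v hv
    rw [sub_sub]
    exact ((hasFDerivAt_comp_add_left x).2 hv).sub
      (((f' x).hasFDerivAt.const_add (f x)).add (hasFDerivAt_half_smul_bilin_self hsymm v))
  have hderiv : (fun v => f' (x + v) - f' x - f'' v) =o[nhds 0] fun v => ‖v - 0‖ ^ 1 := by
    simpa using (hasFDerivAt_iff_isLittleO_nhds_zero.1 hf').norm_right
  simpa using isLittleO_norm_pow_succ_of_eventually_hasFDerivAt hremainder hderiv

theorem taylor_two_comp_isLittleO {φ φ' : ℝ → ℝ} {φ'' : ℝ} {g : E → ℝ} {g' : E → E →L[ℝ] ℝ}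
    {g'' : E →L[ℝ] E →L[ℝ] ℝ} {x : E} (hφ : ∀ᶠ t in nhds (g x), HasDerivAt φ (φ' t) t)
    (hφ' : HasDerivAt φ' φ'' (g x)) (hg : ∀ᶠ y in nhds x, HasFDerivAt g (g' y) y)
    (hg' : HasFDerivAt g' g'' x) :
    (fun v => φ (g (x + v)) - (φ (g x) + φ' (g x) * (g' x v + (1 / 2) * g'' v v)
        + (1 / 2) * φ'' * g' x v ^ 2))
      =o[nhds 0] fun v => ‖v‖ ^ 2 := by
  have hgx : HasFDerivAt g (g' x) x := hg.self_of_nhds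
  have hcomp : ∀ᶠ y in nhds x, HasFDerivAt (φ ∘ g) (φ' (g y) • g' y) y := by
    filter_upwards [hg, hgx.continuousAt.eventually hφ] with y hgy hφy
    exact hφy.comp_hasFDerivAt y hgy
  refine (taylor_two_isLittleO hcomp
    ((hφ'.comp_hasFDerivAt x hgx).smul hg')).congr_left fun v => ?_
  simp only [Function.comp_apply, smul_apply, smul_eq_mul, add_apply,
    ContinuousLinearMap.smulRight_apply]
  ring

end Taylor

theorem exp_div_exp_add_exp_eq_sigmoid (a t : ℝ) :
    Real.exp t / (Real.exp a + Real.exp t) = Real.sigmoid (t - a) := by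
  rw [Real.sigmoid_def, neg_sub, Real.exp_sub]
  field_simp
  ring

theorem hasDerivAt_log_exp_add_exp (a t : ℝ) :
    HasDerivAt (fun s => Real.log (Real.exp a + Real.exp s)) (Real.sigmoid (t - a)) t := by
  rw [← exp_div_exp_add_exp_eq_sigmoid]
  exact ((Real.hasDerivAt_exp t).const_add (Real.exp a)).log (by positivity)

theorem log_exp_add_exp_self (a : ℝ) :
    Real.log (Real.exp a + Real.exp a) = a + Real.log 2 := by
  rw [← mul_two, Real.log_mul (Real.exp_ne_zero a) two_ne_zero, Real.log_exp]

theorem hasDerivAt_sigmoid_sub_self (a : ℝ) :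
    HasDerivAt (fun t => Real.sigmoid (t - a)) (1 / 4) a := by
  have h : HasDerivAt Real.sigmoid (1 / 4) (a - a) :=
    (Real.hasDerivAt_sigmoid (a - a)).congr_deriv (by norm_num)
  exact h.comp_sub_const a a

-- `toDual` is bundled as a conjugate-linear map, so its derivative is repackaged as a linear one.
theorem hasFDerivAt_toDual_comp {E F : Type*} [NormedAddCommGroup E] [NormedSpace ℝ E]
    [NormedAddCommGroup F] [InnerProductSpace ℝ F] [CompleteSpace F]
    {f : E → F} {f' : E →L[ℝ] F} {x : E} (hf : HasFDerivAt f f' x) :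
    HasFDerivAt (fun y => InnerProductSpace.toDual ℝ F (f y))
      ((isBoundedBilinearMap_inner (𝕜 := ℝ)).toContinuousLinearMap ∘L f') x :=
  ((isBoundedBilinearMap_inner (𝕜 := ℝ)).toContinuousLinearMap.hasFDerivAt (x := f x)).comp x hf

theorem nce_log_sum_exp_expansion_general {E : Type*} [NormedAddCommGroup E] [NormedSpace ℝ E]
    {g : E → ℝ} {g' : E → E →L[ℝ] ℝ} {g'' : E →L[ℝ] E →L[ℝ] ℝ} {x : E}
    (hg : ∀ᶠ y in nhds x, HasFDerivAt g (g' y) y) (hg' : HasFDerivAt g' g'' x) :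
    (fun v => Real.log (Real.exp (g x) + Real.exp (g (x + v)))
        - (g x + Real.log 2 + (1 / 2) * (g' x v + (1 / 2) * g'' v v) + (1 / 8) * g' x v ^ 2))
      =o[nhds 0] fun v => ‖v‖ ^ 2 := by
  refine (taylor_two_comp_isLittleO (.of_forall (hasDerivAt_log_exp_add_exp (g x)))
    (hasDerivAt_sigmoid_sub_self (g x)) hg hg').congr_left fun v => ?_
  rw [log_exp_add_exp_self, sub_self, Real.sigmoid_zero]
  ring

/-- **The key Taylor expansion in Proposition C.1 of the paper**, connecting noise
contrastive estimation to sliced score matching: if `g` is twice differentiable at `x`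
(with gradient field `g'` near `x` and Hessian `H` at `x`), then as `v → 0`,
`log(e^{g(x)} + e^{g(x+v)}) = g(x) + log 2 + ½(∇g(x)ᵀv + ½ vᵀH(x)v) + ⅛(∇g(x)ᵀv)² + o(‖v‖²)`. -/
theorem nce_log_sum_exp_expansion
    (D : ℕ) (g : EuclideanSpace ℝ (Fin D) → ℝ) (x : EuclideanSpace ℝ (Fin D))
    (g' : EuclideanSpace ℝ (Fin D) → EuclideanSpace ℝ (Fin D))
    (H : EuclideanSpace ℝ (Fin D) →L[ℝ] EuclideanSpace ℝ (Fin D))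
    (hg' : ∀ᶠ y in nhds x, HasGradientAt g (g' y) y)
    (hH : HasFDerivAt g' H x) :
    (fun v => Real.log (Real.exp (g x) + Real.exp (g (x + v)))
        - (g x + Real.log 2 + (1/2) * (⟪g' x, v⟫ + (1/2) * ⟪v, H v⟫)
          + (1/8) * ⟪g' x, v⟫ ^ 2))
      =o[nhds (0 : EuclideanSpace ℝ (Fin D))] (fun v => ‖v‖ ^ 2) := by
  simpa [real_inner_comm] using nce_log_sum_exp_expansion_general
    (hg'.mono fun _ hy => hy.hasFDerivAt) (hasFDerivAt_toDual_comp hH)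
end
end
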